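/- A probability distribution y on X satisfies V(y) = 0 if and only if y = ν_ρ for some ρ ∈ (0,∞)^K satisfying the fixed point equations (γ_k + μ_k)ρ_k = λ_k + γ_k ⟨I_k, ν_ρ⟩ for all k, where ν_ρ(n) = (1/Z(ρ)) ∏_k ρ_k^{n_k}/n_k! and Z(ρ) = ∑_{n∈X} ∏_k ρ_k^{n_k}/n_k!. -/

import Mathlib

open Finset

/-- The state space `X = {n ∈ ℕ^K : ∑_k A_k n_k ≤ C}` as a `Finset` of `Fin K → ℕ`. -/
def XF (K C : ℕ) (A : Fin K → ℕ) : Finset (Fin K → ℕ) :=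
  (Fintype.piFinset fun _ => Finset.range (C + 1)).filter fun n => ∑ k, A k * n k ≤ C

/-- `⟨I_k, y⟩ = ∑_{m ∈ X} m_k y_m`. -/
noncomputable def avgI (K C : ℕ) (A : Fin K → ℕ) (y : (Fin K → ℕ) → ℝ) (k : Fin K) : ℝ :=
  ∑ n ∈ XF K C A, (n k : ℝ) * y n

/-- The limiting vector field `V` of the network dynamics. -/
noncomputable def Vf (K C : ℕ) (A : Fin K → ℕ) (lam gam mu : Fin K → ℝ)
    (y : (Fin K → ℕ) → ℝ) (n : Fin K → ℕ) : ℝ :=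
  (∑ k, (lam k + gam k * avgI K C A y k) *
      ((if 1 ≤ n k then y (n - Pi.single k 1) else 0)
        - (if n + Pi.single k 1 ∈ XF K C A then y n else 0)))
  + ∑ k, (gam k + mu k) *
      (((n k : ℝ) + 1) * (if n + Pi.single k 1 ∈ XF K C A then y (n + Pi.single k 1) else 0)
        - (n k : ℝ) * y n)

/-- The partition function `Z(ρ) = ∑_{n ∈ X} ∏_k ρ_k^{n_k} / n_k!`. -/
noncomputable def Zf (K C : ℕ) (A : Fin K → ℕ) (ρ : Fin K → ℝ) : ℝ :=
  ∑ n ∈ XF K C A, ∏ k, ρ k ^ n k / (Nat.factorial (n k) : ℝ)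

/-- `ν_ρ(n) = (1/Z(ρ)) ∏_k ρ_k^{n_k}/n_k!`. -/
noncomputable def nuf (K C : ℕ) (A : Fin K → ℕ) (ρ : Fin K → ℝ) (n : Fin K → ℕ) : ℝ :=
  (∏ k, ρ k ^ n k / (Nat.factorial (n k) : ℝ)) / Zf K C A ρ

/-!
For fixed arrival rates `a` and departure rates `b`, the forward operator of a loss network on a
finite lower set `X` is the discrete divergence of the currents
`J k n = a k * y n - b k * (n k + 1) * y (n + e k)`, where `e k` is the `k`-th unit vector.
With `w` the product Poisson weight of parameter `ρ = a / b` and `h = y / w`, the current is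
`a k * w n * (h n - h (n + e k))`, so pairing the operator with `h` and summing by parts gives
minus the Dirichlet form
`∑ a k * w n * (h (n + e k) - h n) ^ 2`. At a stationary point the Dirichlet form vanishes, hence
`h` is constant, because every point of a lower set is joined to `0` inside it.

The drift `V` is this forward operator with arrival rates depending on `y` only through its means,
so at an equilibrium the relation `b k * ρ k = a k` is the fixed point equation.
-/

section LowerSet

variable {ι : Type*} [DecidableEq ι]

lemma sub_single_add_single {n : ι → ℕ} {k : ι} (hk : 1 ≤ n k) :
    n - Pi.single k 1 + Pi.single k 1 = n :=
  tsub_add_cancel_of_le (update_le_iff.2 ⟨hk, fun _ _ => Nat.zero_le _⟩)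

lemma eq_apply_zero_of_add_single_eq [Finite ι] {X : Set (ι → ℕ)} (hX : IsLowerSet X)
    {α : Type*} {f : (ι → ℕ) → α}
    (hf : ∀ k n, n + Pi.single k 1 ∈ X → f (n + Pi.single k 1) = f n) :
    ∀ n ∈ X, f n = f 0 := by
  intro n
  induction n using WellFoundedLT.induction with
  | ind n ih =>
    intro hn
    obtain rfl | hn0 := eq_or_ne n 0
    · rfl
    obtain ⟨k, hk⟩ := Function.ne_iff.1 hn0
    have hcancel := sub_single_add_single (Nat.one_le_iff_ne_zero.2 hk)
    have hle : n - Pi.single k 1 ≤ n := tsub_le_self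
    have hlt : n - Pi.single k 1 < n :=
      hle.lt_of_ne fun h => by simpa [h] using congrFun hcancel k
    calc f n = f (n - Pi.single k 1 + Pi.single k 1) := by rw [hcancel]
      _ = f (n - Pi.single k 1) := hf k _ (by rwa [hcancel])
      _ = f 0 := ih _ hlt (hX hle hn)

lemma sum_ite_sub_single [Fintype ι] {M : Type*} [AddCommMonoid M] {X : Finset (ι → ℕ)}
    (hX : IsLowerSet (X : Set (ι → ℕ))) (k : ι) (F : (ι → ℕ) → (ι → ℕ) → M) :
    ∑ n ∈ X, (if 1 ≤ n k then F (n - Pi.single k 1) n else 0) =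
      ∑ n ∈ X with n + Pi.single k 1 ∈ X, F n (n + Pi.single k 1) := by
  rw [← sum_filter]
  refine sum_nbij' (· - Pi.single k 1) (· + Pi.single k 1) ?_ ?_ ?_ ?_ ?_
  · intro n hn
    obtain ⟨hnX, hk⟩ := mem_filter.1 hn
    rw [mem_filter, sub_single_add_single hk]
    exact ⟨hX (tsub_le_self (a := n)) hnX, hnX⟩
  · intro n hn
    simpa using (mem_filter.1 hn).2
  · intro n hn
    exact sub_single_add_single (mem_filter.1 hn).2
  · intro n _
    exact add_tsub_cancel_right _ _
  · intro n hn
    rw [sub_single_add_single (mem_filter.1 hn).2]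

end LowerSet

section PoissonWeight

variable {ι : Type*} [Fintype ι]

/-- The unnormalized density `∏ k, ρ k ^ n k / (n k)!` of independent Poisson variables. -/
noncomputable def poissonWeight (ρ : ι → ℝ) (n : ι → ℕ) : ℝ :=
  ∏ k, ρ k ^ n k / (Nat.factorial (n k) : ℝ)

/-- The product Poisson law of parameter `ρ` conditioned on `X`. It is given by one formula on all
of `ι → ℕ`, and is meaningful only on `X`. -/
noncomputable def truncatedPoisson (X : Finset (ι → ℕ)) (ρ : ι → ℝ) (n : ι → ℕ) : ℝ :=
  poissonWeight ρ n / ∑ m ∈ X, poissonWeight ρ m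

lemma poissonWeight_pos {ρ : ι → ℝ} (hρ : ∀ k, 0 < ρ k) (n : ι → ℕ) : 0 < poissonWeight ρ n :=
  prod_pos fun k _ => div_pos (pow_pos (hρ k) _) (mod_cast Nat.factorial_pos _)

lemma poissonWeight_add_single [DecidableEq ι] (ρ : ι → ℝ) (n : ι → ℕ) (k : ι) :
    ((n k : ℝ) + 1) * poissonWeight ρ (n + Pi.single k 1) = ρ k * poissonWeight ρ n := by
  set n' : ι → ℕ := n + Pi.single k 1 with hn'
  have hoff : ∀ j ∈ univ.erase k, ρ j ^ n' j / ((n' j).factorial : ℝ)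
      = ρ j ^ n j / ((n j).factorial : ℝ) := fun j hj => by
    simp [hn', Pi.single_eq_of_ne (ne_of_mem_erase hj)]
  have hat : ((n k : ℝ) + 1) * (ρ k ^ n' k / ((n' k).factorial : ℝ)) =
      ρ k * (ρ k ^ n k / ((n k).factorial : ℝ)) := by
    simp only [hn', Pi.add_apply, Pi.single_eq_same, Nat.factorial_succ, Nat.cast_mul,
      Nat.cast_succ, pow_succ]
    field_simp
  rw [poissonWeight, poissonWeight, ← mul_prod_erase univ _ (mem_univ k),
    ← mul_prod_erase univ (fun j => ρ j ^ n j / ((n j).factorial : ℝ)) (mem_univ k),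
    prod_congr rfl hoff, ← mul_assoc, hat, mul_assoc]

lemma eq_truncatedPoisson_iff {X : Finset (ι → ℕ)} {ρ : ι → ℝ} (hρ : ∀ k, 0 < ρ k)
    {y : (ι → ℕ) → ℝ} (hy : ∑ n ∈ X, y n = 1) :
    (∀ n ∈ X, y n = truncatedPoisson X ρ n) ↔
      ∃ c, ∀ n ∈ X, y n / poissonWeight ρ n = c := by
  have hw n : poissonWeight ρ n ≠ 0 := (poissonWeight_pos hρ n).ne'
  constructor
  · intro h
    refine ⟨(∑ m ∈ X, poissonWeight ρ m)⁻¹, fun n hn => ?_⟩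
    rw [h n hn, truncatedPoisson, div_right_comm, div_self (hw n), one_div]
  · rintro ⟨c, hc⟩ n hn
    have hyc : ∀ m ∈ X, y m = c * poissonWeight ρ m := fun m hm =>
      (div_eq_iff (hw m)).1 (hc m hm)
    have hcZ : c * ∑ m ∈ X, poissonWeight ρ m = 1 := by
      rw [mul_sum, ← sum_congr rfl hyc, hy]
    rw [hyc n hn, truncatedPoisson, eq_inv_of_mul_eq_one_left hcZ, inv_mul_eq_div]

end PoissonWeight

section ForwardOperator

variable {ι : Type*} [DecidableEq ι]

/-- The net probability flow from `n` to `n + e k` in a loss network with arrival rates `a` and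
departure rates `b` per customer. -/
def current (a b : ι → ℝ) (y : (ι → ℕ) → ℝ) (k : ι) (n : ι → ℕ) : ℝ :=
  a k * y n - b k * ((n k : ℝ) + 1) * y (n + Pi.single k 1)

variable [Fintype ι]

/-- The right-hand side of the Kolmogorov forward equation of the loss network on `X` with arrival
rates `a` and departure rates `b` per customer; arrivals that would leave `X` are lost. -/
def forwardOperator (X : Finset (ι → ℕ)) (a b : ι → ℝ) (y : (ι → ℕ) → ℝ) (n : ι → ℕ) : ℝ :=
  (∑ k, a k * ((if 1 ≤ n k then y (n - Pi.single k 1) else 0)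
      - (if n + Pi.single k 1 ∈ X then y n else 0)))
  + ∑ k, b k * (((n k : ℝ) + 1) * (if n + Pi.single k 1 ∈ X then y (n + Pi.single k 1) else 0)
      - (n k : ℝ) * y n)

lemma forwardOperator_eq_sum_current (X : Finset (ι → ℕ)) (a b : ι → ℝ) (y : (ι → ℕ) → ℝ)
    (n : ι → ℕ) :
    forwardOperator X a b y n =
      ∑ k, ((if 1 ≤ n k then current a b y k (n - Pi.single k 1) else 0)
        - (if n + Pi.single k 1 ∈ X then current a b y k n else 0)) := by
  rw [forwardOperator, ← sum_add_distrib]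
  refine sum_congr rfl fun k _ => ?_
  have hin : (if 1 ≤ n k then current a b y k (n - Pi.single k 1) else 0) =
      a k * (if 1 ≤ n k then y (n - Pi.single k 1) else 0) - b k * (n k * y n) := by
    split_ifs with hk
    · simp only [current, sub_single_add_single hk, Pi.sub_apply, Pi.single_eq_same,
        Nat.cast_sub hk, Nat.cast_one]
      ring
    · simp [show n k = 0 by lia]
  rw [hin, current]
  split_ifs <;> ring

lemma sum_mul_forwardOperator {X : Finset (ι → ℕ)} (hX : IsLowerSet (X : Set (ι → ℕ)))
    (a b : ι → ℝ) (y h : (ι → ℕ) → ℝ) :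
    ∑ n ∈ X, h n * forwardOperator X a b y n =
      ∑ k, ∑ n ∈ X with n + Pi.single k 1 ∈ X,
        (h (n + Pi.single k 1) - h n) * current a b y k n := by
  simp only [forwardOperator_eq_sum_current, mul_sum]
  rw [sum_comm]
  refine sum_congr rfl fun k _ => ?_
  simp only [mul_sub, sub_mul, mul_ite, mul_zero, sum_sub_distrib]
  rw [sum_ite_sub_single hX k fun m n => h n * current a b y k m,
    sum_filter _ fun n => h n * current a b y k n]

variable {a b ρ : ι → ℝ}

lemma current_eq_mul_sub (hρ : ∀ k, 0 < ρ k) (hab : ∀ k, b k * ρ k = a k) (y : (ι → ℕ) → ℝ)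
    (k : ι) (n : ι → ℕ) :
    current a b y k n = a k * poissonWeight ρ n *
      (y n / poissonWeight ρ n
        - y (n + Pi.single k 1) / poissonWeight ρ (n + Pi.single k 1)) := by
  have hw := (poissonWeight_pos hρ n).ne'
  have hw' := (poissonWeight_pos hρ (n + Pi.single k 1)).ne'
  rw [current, ← hab k]
  field_simp
  linear_combination -(b k * y (n + Pi.single k 1)) * poissonWeight_add_single ρ n k

/-- The Dirichlet form of `h` for the loss network on `X` with arrival rates `a`, reversible with
respect to the product Poisson weight of parameter `ρ`: each edge from `n` to `n + e k` inside `X`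
has conductance `a k * poissonWeight ρ n`. -/
noncomputable def dirichletForm (X : Finset (ι → ℕ)) (a ρ : ι → ℝ) (h : (ι → ℕ) → ℝ) : ℝ :=
  ∑ k, ∑ n ∈ X with n + Pi.single k 1 ∈ X,
    a k * poissonWeight ρ n * (h (n + Pi.single k 1) - h n) ^ 2

lemma dirichletForm_eq_zero_iff {X : Finset (ι → ℕ)} (hX : IsLowerSet (X : Set (ι → ℕ)))
    (ha : ∀ k, 0 < a k) (hρ : ∀ k, 0 < ρ k) {h : (ι → ℕ) → ℝ} :
    dirichletForm X a ρ h = 0 ↔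
      ∀ k n, n + Pi.single k 1 ∈ X → h (n + Pi.single k 1) = h n := by
  have hcond : ∀ k n, 0 < a k * poissonWeight ρ n := fun k n =>
    mul_pos (ha k) (poissonWeight_pos hρ n)
  have hnonneg : ∀ k n, 0 ≤ a k * poissonWeight ρ n * (h (n + Pi.single k 1) - h n) ^ 2 :=
    fun k n => mul_nonneg (hcond k n).le (sq_nonneg _)
  have hterm : ∀ k n, a k * poissonWeight ρ n * (h (n + Pi.single k 1) - h n) ^ 2 = 0 ↔
      h (n + Pi.single k 1) = h n := fun k n => by
    rw [mul_eq_zero_iff_left (hcond k n).ne', sq_eq_zero_iff, sub_eq_zero]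
  have hmem : ∀ k n, n ∈ X ∧ n + Pi.single k 1 ∈ X ↔ n + Pi.single k 1 ∈ X := fun k n =>
    and_iff_right_of_imp fun hn => hX (le_add_right le_rfl) hn
  rw [dirichletForm, sum_eq_zero_iff_of_nonneg fun k _ => sum_nonneg fun n _ => hnonneg k n]
  simp only [sum_eq_zero_iff_of_nonneg fun n _ => hnonneg _ n, mem_univ, true_imp_iff,
    mem_filter, hmem, hterm]

lemma sum_div_poissonWeight_mul_forwardOperator {X : Finset (ι → ℕ)}
    (hX : IsLowerSet (X : Set (ι → ℕ))) (hρ : ∀ k, 0 < ρ k) (hab : ∀ k, b k * ρ k = a k)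
    (y : (ι → ℕ) → ℝ) :
    ∑ n ∈ X, y n / poissonWeight ρ n * forwardOperator X a b y n =
      -dirichletForm X a ρ fun n => y n / poissonWeight ρ n := by
  rw [sum_mul_forwardOperator hX a b y fun n => y n / poissonWeight ρ n, dirichletForm]
  simp only [current_eq_mul_sub hρ hab, ← sum_neg_distrib]
  exact sum_congr rfl fun k _ => sum_congr rfl fun n _ => by ring

lemma current_eq_zero_iff (ha : ∀ k, 0 < a k) (hρ : ∀ k, 0 < ρ k)
    (hab : ∀ k, b k * ρ k = a k) {y : (ι → ℕ) → ℝ} {k : ι} {n : ι → ℕ} :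
    current a b y k n = 0 ↔
      y (n + Pi.single k 1) / poissonWeight ρ (n + Pi.single k 1) = y n / poissonWeight ρ n := by
  have hcoeff : a k * poissonWeight ρ n ≠ 0 :=
    (mul_pos (ha k) (poissonWeight_pos hρ n)).ne'
  rw [current_eq_mul_sub hρ hab, mul_eq_zero_iff_left hcoeff, sub_eq_zero, eq_comm]

lemma forwardOperator_eq_zero_iff_current_eq_zero {X : Finset (ι → ℕ)}
    (hX : IsLowerSet (X : Set (ι → ℕ))) (ha : ∀ k, 0 < a k) (hb : ∀ k, 0 < b k)
    {y : (ι → ℕ) → ℝ} :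
    (∀ n ∈ X, forwardOperator X a b y n = 0) ↔
      ∀ k n, n + Pi.single k 1 ∈ X → current a b y k n = 0 := by
  constructor
  · intro hstat k n hn
    have hρ : ∀ k, 0 < a k / b k := fun k => div_pos (ha k) (hb k)
    have hab : ∀ k, b k * (a k / b k) = a k := fun k => mul_div_cancel₀ _ (hb k).ne'
    have hform : dirichletForm X a (fun k => a k / b k)
        (fun n => y n / poissonWeight (fun k => a k / b k) n) = 0 := by
      rw [← neg_eq_zero, ← sum_div_poissonWeight_mul_forwardOperator hX hρ hab y]
      exact sum_eq_zero fun n hn => by rw [hstat n hn, mul_zero]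
    exact (current_eq_zero_iff ha hρ hab).2 ((dirichletForm_eq_zero_iff hX ha hρ).1 hform k n hn)
  · intro hcur n hn
    rw [forwardOperator_eq_sum_current]
    refine sum_eq_zero fun k _ => ?_
    have hin : (if 1 ≤ n k then current a b y k (n - Pi.single k 1) else 0) = 0 :=
      ite_eq_right_iff.2 fun hk => hcur k _ (by rwa [sub_single_add_single hk])
    have hout : (if n + Pi.single k 1 ∈ X then current a b y k n else 0) = 0 :=
      ite_eq_right_iff.2 (hcur k n)
    rw [hin, hout, sub_zero]

lemma forwardOperator_eq_zero_iff {X : Finset (ι → ℕ)} (hX : IsLowerSet (X : Set (ι → ℕ)))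
    (hb : ∀ k, 0 < b k) (hρ : ∀ k, 0 < ρ k) (hab : ∀ k, b k * ρ k = a k)
    {y : (ι → ℕ) → ℝ} (hy : ∑ n ∈ X, y n = 1) :
    (∀ n ∈ X, forwardOperator X a b y n = 0) ↔ ∀ n ∈ X, y n = truncatedPoisson X ρ n := by
  have ha : ∀ k, 0 < a k := fun k => hab k ▸ mul_pos (hb k) (hρ k)
  simp only [forwardOperator_eq_zero_iff_current_eq_zero hX ha hb, eq_truncatedPoisson_iff hρ hy,
    current_eq_zero_iff ha hρ hab]
  constructor
  · intro hstep
    exact ⟨_, eq_apply_zero_of_add_single_eq (f := fun n => y n / poissonWeight ρ n) hX hstep⟩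
  · rintro ⟨c, hc⟩ k n hn
    rw [hc _ hn, hc n (hX (le_add_right le_rfl) hn)]

end ForwardOperator

section MeanField

variable {ι : Type*}

/-- The mean `∑ n ∈ X, n k * y n` of the `k`-th coordinate under `y`. -/
def meanOccupancy (X : Finset (ι → ℕ)) (y : (ι → ℕ) → ℝ) (k : ι) : ℝ :=
  ∑ n ∈ X, (n k : ℝ) * y n

lemma meanOccupancy_congr {X : Finset (ι → ℕ)} {y z : (ι → ℕ) → ℝ} (h : ∀ n ∈ X, y n = z n) :
    meanOccupancy X y = meanOccupancy X z :=
  funext fun k => sum_congr rfl fun n hn => by rw [h n hn]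

variable [DecidableEq ι] [Fintype ι]

/-- The drift `V` of the mean-field dynamics on an arbitrary finite state space `X`: the forward
operator with arrival rates `lam k + gam k * meanOccupancy X y k` and departure rates
`gam k + mu k`. -/
def meanFieldDrift (X : Finset (ι → ℕ)) (lam gam mu : ι → ℝ) (y : (ι → ℕ) → ℝ) : (ι → ℕ) → ℝ :=
  forwardOperator X (fun k => lam k + gam k * meanOccupancy X y k) (fun k => gam k + mu k) y

theorem equilibrium_iff_fixed_point_general {X : Finset (ι → ℕ)}
    (hX : IsLowerSet (X : Set (ι → ℕ))) {lam gam mu : ι → ℝ}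
    (hlam : ∀ k, 0 < lam k) (hgam : ∀ k, 0 ≤ gam k) (hdep : ∀ k, 0 < gam k + mu k)
    {y : (ι → ℕ) → ℝ} (hynn : ∀ n ∈ X, 0 ≤ y n) (hysum : ∑ n ∈ X, y n = 1) :
    (∀ n ∈ X, meanFieldDrift X lam gam mu y n = 0) ↔
      ∃ ρ : ι → ℝ, (∀ k, 0 < ρ k) ∧
        (∀ n ∈ X, y n = truncatedPoisson X ρ n) ∧
        (∀ k, (gam k + mu k) * ρ k =
          lam k + gam k * meanOccupancy X (truncatedPoisson X ρ) k) := by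
  constructor
  · intro hV
    have hmean : ∀ k, 0 ≤ meanOccupancy X y k := fun k =>
      sum_nonneg fun n hn => mul_nonneg (Nat.cast_nonneg _) (hynn n hn)
    have harr : ∀ k, 0 < lam k + gam k * meanOccupancy X y k := fun k =>
      add_pos_of_pos_of_nonneg (hlam k) (mul_nonneg (hgam k) (hmean k))
    let ρ : ι → ℝ := fun k => (lam k + gam k * meanOccupancy X y k) / (gam k + mu k)
    have hρ : ∀ k, 0 < ρ k := fun k => div_pos (harr k) (hdep k)
    have hfix : ∀ k, (gam k + mu k) * ρ k = lam k + gam k * meanOccupancy X y k := fun k =>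
      mul_div_cancel₀ _ (hdep k).ne'
    have hy := (forwardOperator_eq_zero_iff hX hdep hρ hfix hysum).1 hV
    exact ⟨ρ, hρ, hy, meanOccupancy_congr hy ▸ hfix⟩
  · rintro ⟨ρ, hρ, hy, hfix⟩
    rw [← meanOccupancy_congr hy] at hfix
    exact (forwardOperator_eq_zero_iff hX hdep hρ hfix hysum).2 hy

end MeanField

lemma isLowerSet_XF (K C : ℕ) (A : Fin K → ℕ) : IsLowerSet (XF K C A : Set (Fin K → ℕ)) := by
  intro n m hmn hn
  simp only [XF, mem_coe, mem_filter, Fintype.mem_piFinset, mem_range] at hn ⊢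
  exact ⟨fun k => (hmn k).trans_lt (hn.1 k),
    (sum_le_sum fun k _ => Nat.mul_le_mul_left _ (hmn k)).trans hn.2⟩

/-- A probability distribution `y` on `X` satisfies `V(y) = 0` iff `y = ν_ρ` for some
`ρ ∈ (0,∞)^K` satisfying the fixed point equations
`(γ_k + μ_k) ρ_k = λ_k + γ_k ⟨I_k, ν_ρ⟩` for all `k`. -/
theorem equilibrium_iff_fixed_point (K C : ℕ) (hK : 0 < K) (hC : 0 < C)
    (A : Fin K → ℕ) (hA : ∀ k, 0 < A k)
    (lam gam mu : Fin K → ℝ)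
    (hlam : ∀ k, 0 < lam k) (hgam : ∀ k, 0 < gam k) (hmu : ∀ k, 0 ≤ mu k)
    (y : (Fin K → ℕ) → ℝ)
    (hysupp : ∀ n ∉ XF K C A, y n = 0)
    (hynn : ∀ n, 0 ≤ y n)
    (hysum : ∑ n ∈ XF K C A, y n = 1) :
    (∀ n ∈ XF K C A, Vf K C A lam gam mu y n = 0) ↔
      ∃ ρ : Fin K → ℝ, (∀ k, 0 < ρ k) ∧
        (∀ n ∈ XF K C A, y n = nuf K C A ρ n) ∧
        (∀ k, (gam k + mu k) * ρ k = lam k + gam k * avgI K C A (nuf K C A ρ) k) :=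
  equilibrium_iff_fixed_point_general (isLowerSet_XF K C A) hlam (fun k => (hgam k).le)
    (fun k => add_pos_of_pos_of_nonneg (hgam k) (hmu k)) (fun n _ => hynn n) hysum
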